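/- Assume m23 + m33 = 0 (the class 2 nontypicality condition; note m13 + m33 + 1 ≠ 0 then follows from m13 ≥ m23). Then I_2 := V_1 ⊕ V_3 is a proper invariant subspace of W, every proper invariant subspace of W is contained in I_2, and the operators induced by E11, E22, E33, E12, E21, E23, E32 on the quotient space W/I_2 leave no subspace invariant except {0} and W/I_2; i.e. W/I_2 carries the class 2 nontypical irreducible representation of U_q[gl(2/1)]. -/

import Mathlib

/-!
The subspace `I₂ = V₁ ⊕ V₃` is the set of vectors whose coordinates in the sectors `0` and `2`
vanish (`mem_I2`). It is invariant because `[m23 + m33] = 0` kills the terms of `E23` that lead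
from `V₁` to `V₀` and from `V₃` to `V₂`.

Everything else follows from the claim that an invariant `U` not contained in `I₂` is all of `W`
(`eq_top_of_not_le`). Such a `U` has a vector with a nonzero coordinate in sector `0` or `2`; since
`[m13 + m33 + 1] ≠ 0`, `E23` moves a nonzero sector-`2` coordinate to a nonzero sector-`0`
coordinate (`E23_coord`). A sector-`0` basis vector is determined by its `E33`- and
`E11`-eigenvalues, so projecting onto eigenspaces of diagonal operators (`filter_mem`) puts some
`v(0, x)` in `U`. The raising and lowering operators then give `V₀ ⊆ U` (`sector_mem`), and `E32`
gives successively `V₁`, `V₂` and `V₃`. For the quotient, the claim is applied to the preimage in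
`W` of an invariant subspace of `W/I₂`.
-/

noncomputable section

/-- The `q`-number `[x] = (q^x - q^(-x))/(q - q⁻¹)`. -/
def qn (q : ℝ) (x : ℤ) : ℝ := (q ^ x - q ^ (-x)) / (q - q⁻¹)

/-- The triple `(m12, m22, m32)` attached to the sector `k ∈ {0,1,2,3}`. -/
def trip (m13 m23 m33 : ℤ) : Fin 4 → ℤ × ℤ × ℤ
  | 0 => (m13, m23, m33)
  | 1 => (m13, m23 - 1, m33 + 1)
  | 2 => (m13 - 1, m23, m33 + 1)
  | 3 => (m13 - 1, m23 - 1, m33 + 2)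

def M12 (m13 m23 m33 : ℤ) (k : Fin 4) : ℤ := (trip m13 m23 m33 k).1
def M22 (m13 m23 m33 : ℤ) (k : Fin 4) : ℤ := (trip m13 m23 m33 k).2.1
def M32 (m13 m23 m33 : ℤ) (k : Fin 4) : ℤ := (trip m13 m23 m33 k).2.2

/-- `m11` is in the allowed range `m22 ≤ m11 ≤ m12` of the sector `k`. -/
def InR (m13 m23 m33 : ℤ) (k : Fin 4) (x : ℤ) : Prop :=
  M22 m13 m23 m33 k ≤ x ∧ x ≤ M12 m13 m23 m33 k

instance (m13 m23 m33 : ℤ) (k : Fin 4) (x : ℤ) : Decidable (InR m13 m23 m33 k x) :=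
  instDecidableAnd

/-- The index set of the basis `v(k, m11)` of `W`. -/
abbrev Idx (m13 m23 m33 : ℤ) : Type :=
  {p : Fin 4 × ℤ // InR m13 m23 m33 p.1 p.2}

/-- The module `W = W^q([m13,m23,m33])`, realized as the free complex vector
space on the basis `v(k, m11)`, `k ∈ {0,1,2,3}`, `m22 ≤ m11 ≤ m12`. -/
abbrev Wsp (m13 m23 m33 : ℤ) : Type := Idx m13 m23 m33 →₀ ℂ

/-- The basis vector `v(k, m11)` (zero if `m11` is out of range). -/
def bv (m13 m23 m33 : ℤ) (k : Fin 4) (x : ℤ) : Wsp m13 m23 m33 :=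
  if h : InR m13 m23 m33 k x then Finsupp.single ⟨(k, x), h⟩ 1 else 0

/-- The sector `V_k`, the span of the `v(k, ·)`. -/
def Vk (m13 m23 m33 : ℤ) (k : Fin 4) : Submodule ℂ (Wsp m13 m23 m33) :=
  Submodule.span ℂ (Set.range (bv m13 m23 m33 k))

/-- The Gel'fand--Zetlin realization of the induced `U_q[gl(2/1)]`-module
`W^q([m13,m23,m33])`: seven linear operators acting on the basis `v(k, m11)`
by the stated formulas (terms with `m11` out of range being `0`). -/
structure GZ (q : ℝ) (m13 m23 m33 : ℤ) where
  E11 : Wsp m13 m23 m33 →ₗ[ℂ] Wsp m13 m23 m33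
  E22 : Wsp m13 m23 m33 →ₗ[ℂ] Wsp m13 m23 m33
  E33 : Wsp m13 m23 m33 →ₗ[ℂ] Wsp m13 m23 m33
  E12 : Wsp m13 m23 m33 →ₗ[ℂ] Wsp m13 m23 m33
  E21 : Wsp m13 m23 m33 →ₗ[ℂ] Wsp m13 m23 m33
  E23 : Wsp m13 m23 m33 →ₗ[ℂ] Wsp m13 m23 m33
  E32 : Wsp m13 m23 m33 →ₗ[ℂ] Wsp m13 m23 m33
  hE11 : ∀ (k : Fin 4) (x : ℤ), InR m13 m23 m33 k x →
    E11 (bv m13 m23 m33 k x) = (x : ℂ) • bv m13 m23 m33 k x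
  hE22 : ∀ (k : Fin 4) (x : ℤ), InR m13 m23 m33 k x →
    E22 (bv m13 m23 m33 k x) =
      ((M12 m13 m23 m33 k + M22 m13 m23 m33 k - x : ℤ) : ℂ) • bv m13 m23 m33 k x
  hE33 : ∀ (k : Fin 4) (x : ℤ), InR m13 m23 m33 k x →
    E33 (bv m13 m23 m33 k x) = ((M32 m13 m23 m33 k : ℤ) : ℂ) • bv m13 m23 m33 k x
  hE12 : ∀ (k : Fin 4) (x : ℤ), InR m13 m23 m33 k x →
    E12 (bv m13 m23 m33 k x) =
      ((Real.sqrt (qn q (M12 m13 m23 m33 k - x) * qn q (x - M22 m13 m23 m33 k + 1)) : ℝ) : ℂ) •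
        bv m13 m23 m33 k (x + 1)
  hE21 : ∀ (k : Fin 4) (x : ℤ), InR m13 m23 m33 k x →
    E21 (bv m13 m23 m33 k x) =
      ((Real.sqrt (qn q (M12 m13 m23 m33 k - x + 1) * qn q (x - M22 m13 m23 m33 k)) : ℝ) : ℂ) •
        bv m13 m23 m33 k (x - 1)
  hE23₀ : ∀ x : ℤ, InR m13 m23 m33 0 x → E23 (bv m13 m23 m33 0 x) = 0
  hE23₁ : ∀ x : ℤ, InR m13 m23 m33 1 x →
    E23 (bv m13 m23 m33 1 x) =
      ((Real.sqrt (qn q (x - m23 + 1) / qn q (m13 - m23 + 1)) * qn q (m23 + m33) : ℝ) : ℂ) •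
        bv m13 m23 m33 0 x
  hE23₂ : ∀ x : ℤ, InR m13 m23 m33 2 x →
    E23 (bv m13 m23 m33 2 x) =
      ((Real.sqrt (qn q (m13 - x) / qn q (m13 - m23)) * qn q (m13 + m33 + 1) : ℝ) : ℂ) •
        bv m13 m23 m33 0 x
  hE23₃ : ∀ x : ℤ, InR m13 m23 m33 3 x →
    E23 (bv m13 m23 m33 3 x) =
      ((q⁻¹ * Real.sqrt (qn q (m13 - x) / qn q (m13 - m23 + 1)) * qn q (m13 + m33 + 1) : ℝ) : ℂ) •
          bv m13 m23 m33 1 x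
        - ((q⁻¹ * Real.sqrt (qn q (x - m23 + 1) * qn q (m13 - m23)) *
            (qn q (m23 + m33) / qn q (m13 - m23 + 1)) : ℝ) : ℂ) • bv m13 m23 m33 2 x
  hE32₀ : ∀ x : ℤ, InR m13 m23 m33 0 x →
    E32 (bv m13 m23 m33 0 x) =
      ((Real.sqrt (qn q (x - m23 + 1) / qn q (m13 - m23 + 1)) : ℝ) : ℂ) • bv m13 m23 m33 1 x
        + ((Real.sqrt (qn q (m13 - x) * qn q (m13 - m23)) / qn q (m13 - m23 + 1) : ℝ) : ℂ) •
            bv m13 m23 m33 2 x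
  hE32₁ : ∀ x : ℤ, InR m13 m23 m33 1 x →
    E32 (bv m13 m23 m33 1 x) =
      ((q * Real.sqrt (qn q (m13 - x) / qn q (m13 - m23 + 1)) : ℝ) : ℂ) • bv m13 m23 m33 3 x
  hE32₂ : ∀ x : ℤ, InR m13 m23 m33 2 x →
    E32 (bv m13 m23 m33 2 x) =
      -(((q * Real.sqrt (qn q (x - m23 + 1) / qn q (m13 - m23)) : ℝ) : ℂ) • bv m13 m23 m33 3 x)
  hE32₃ : ∀ x : ℤ, InR m13 m23 m33 3 x → E32 (bv m13 m23 m33 3 x) = 0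

/-- A subspace `U` of `W` is invariant if it is stable under all seven
operators `E11, E22, E33, E12, E21, E23, E32`. -/
def Invariant (q : ℝ) (m13 m23 m33 : ℤ) (R : GZ q m13 m23 m33)
    (U : Submodule ℂ (Wsp m13 m23 m33)) : Prop :=
  ∀ E ∈ ({R.E11, R.E22, R.E33, R.E12, R.E21, R.E23, R.E32} :
      Set (Wsp m13 m23 m33 →ₗ[ℂ] Wsp m13 m23 m33)),
    ∀ x ∈ U, E x ∈ U

theorem qn_pos {q : ℝ} (hq : 0 < q) (hq1 : q ≠ 1) {n : ℤ} (hn : 0 < n) : 0 < qn q n := by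
  unfold qn
  rcases lt_or_gt_of_ne hq1 with h | h
  · have h1 : q ^ n < q ^ (-n) := zpow_lt_zpow_right_of_lt_one₀ hq h (by lia)
    have h2 : 1 < q⁻¹ := (one_lt_inv₀ hq).2 h
    exact div_pos_of_neg_of_neg (by linarith) (by linarith)
  · have h1 : q ^ (-n) < q ^ n := zpow_lt_zpow_right₀ h (by lia)
    have h2 : q⁻¹ < 1 := inv_lt_one_of_one_lt₀ h
    exact div_pos (by linarith) (by linarith)

theorem qn_zero (q : ℝ) : qn q 0 = 0 := by simp [qn]

/-- A subspace stable under a diagonal operator contains the projection of each of its vectors to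
each eigenspace. -/
theorem filter_mem {ι : Type*} (U : Submodule ℂ (ι →₀ ℂ)) (D : (ι →₀ ℂ) →ₗ[ℂ] (ι →₀ ℂ))
    (ev : ι → ℂ) (hD : ∀ i, D (Finsupp.single i 1) = ev i • Finsupp.single i 1)
    (hU : ∀ x ∈ U, D x ∈ U) {u : ι →₀ ℂ} (hu : u ∈ U) (t : ℂ) :
    ∃ w ∈ U, ∀ i, w i = if ev i = t then u i else 0 := by
  classical
  have hcoord : ∀ (w : ι →₀ ℂ) (i : ι), D w i = ev i * w i := by
    intro w i
    induction w using Finsupp.induction_linear with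
    | zero => simp
    | add f g hf hg => simp [hf, hg, mul_add]
    | single j a =>
      have : Finsupp.single j a = a • Finsupp.single j (1 : ℂ) := by simp
      rw [this, map_smul, hD]
      by_cases hij : j = i
      · subst hij; simp [mul_comm]
      · simp [Finsupp.single_eq_of_ne (Ne.symm hij)]
  have key : ∀ S : Finset ℂ, ∃ w ∈ U, ∀ i, w i = (∏ s ∈ S, (ev i - s)) * u i := by
    intro S
    induction S using Finset.induction_on with
    | empty => exact ⟨u, hu, by simp⟩
    | insert s S hs ih =>
      obtain ⟨w, hw, hwi⟩ := ih
      refine ⟨D w - s • w, U.sub_mem (hU w hw) (U.smul_mem s hw), fun i => ?_⟩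
      rw [Finset.prod_insert hs, Finsupp.sub_apply, Finsupp.smul_apply, hcoord, hwi, smul_eq_mul]
      ring
  -- The product over the other eigenvalues occurring in `u` kills all components but that of `t`.
  obtain ⟨w, hw, hwi⟩ := key ((u.support.image ev).erase t)
  have hne : ∏ s ∈ (u.support.image ev).erase t, (t - s) ≠ 0 :=
    Finset.prod_ne_zero_iff.2 fun s hs => sub_ne_zero.2 (Finset.ne_of_mem_erase hs).symm
  refine ⟨(∏ s ∈ (u.support.image ev).erase t, (t - s))⁻¹ • w, U.smul_mem _ hw, fun i => ?_⟩
  rw [Finsupp.smul_apply, hwi, smul_eq_mul]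
  split_ifs with h
  · subst h
    field_simp
  · by_cases hui : u i = 0
    · simp [hui]
    · have : ∏ s ∈ (u.support.image ev).erase t, (ev i - s) = 0 := by
        refine Finset.prod_eq_zero (i := ev i) ?_ (sub_self _)
        exact Finset.mem_erase.2 ⟨h, Finset.mem_image_of_mem _ (Finsupp.mem_support_iff.2 hui)⟩
      simp [this]

section

variable {q : ℝ} {m13 m23 m33 : ℤ}

theorem inR0 {x : ℤ} : InR m13 m23 m33 0 x ↔ m23 ≤ x ∧ x ≤ m13 := Iff.rfl
theorem inR1 {x : ℤ} : InR m13 m23 m33 1 x ↔ m23 - 1 ≤ x ∧ x ≤ m13 := Iff.rfl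
theorem inR2 {x : ℤ} : InR m13 m23 m33 2 x ↔ m23 ≤ x ∧ x ≤ m13 - 1 := Iff.rfl
theorem inR3 {x : ℤ} : InR m13 m23 m33 3 x ↔ m23 - 1 ≤ x ∧ x ≤ m13 - 1 := Iff.rfl

theorem bv_of {k : Fin 4} {x : ℤ} (h : InR m13 m23 m33 k x) :
    bv m13 m23 m33 k x = Finsupp.single ⟨(k, x), h⟩ 1 := dif_pos h

theorem bv_not {k : Fin 4} {x : ℤ} (h : ¬ InR m13 m23 m33 k x) :
    bv m13 m23 m33 k x = 0 := dif_neg h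

theorem single_eq {k : Fin 4} {x : ℤ} (h : InR m13 m23 m33 k x) (a : ℂ) :
    (Finsupp.single ⟨(k, x), h⟩ a : Wsp m13 m23 m33) = a • bv m13 m23 m33 k x := by
  rw [bv_of h]; simp

theorem bv_apply (k : Fin 4) (x : ℤ) (i : Idx m13 m23 m33) :
    bv m13 m23 m33 k x i = if i.1 = (k, x) then 1 else 0 := by
  by_cases h : InR m13 m23 m33 k x
  · rw [bv_of h, Finsupp.single_apply]
    congr 1
    rw [Subtype.ext_iff]
    exact propext eq_comm
  · rw [bv_not h, if_neg]
    · rfl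
    · intro hi
      apply h
      have := i.2
      rw [hi] at this
      exact this

theorem eq_top_of_bv {U : Submodule ℂ (Wsp m13 m23 m33)}
    (h : ∀ k x, InR m13 m23 m33 k x → bv m13 m23 m33 k x ∈ U) : U = ⊤ := by
  rw [eq_top_iff]
  intro u _
  induction u using Finsupp.induction_linear with
  | zero => exact U.zero_mem
  | add f g hf hg => exact U.add_mem (hf trivial) (hg trivial)
  | single j a =>
    obtain ⟨⟨k, x⟩, hj⟩ := j
    rw [single_eq]
    exact U.smul_mem _ (h k x hj)

theorem mem_I2 (u : Wsp m13 m23 m33) :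
    u ∈ Vk m13 m23 m33 1 ⊔ Vk m13 m23 m33 3 ↔
      ∀ i : Idx m13 m23 m33, i.1.1 = 0 ∨ i.1.1 = 2 → u i = 0 := by
  constructor
  · intro hu i hi
    have hle : Vk m13 m23 m33 1 ⊔ Vk m13 m23 m33 3 ≤
        LinearMap.ker (Finsupp.lapply (R := ℂ) (M := ℂ) i) := by
      refine sup_le ?_ ?_ <;> refine Submodule.span_le.2 ?_ <;> rintro _ ⟨x, rfl⟩ <;>
        rw [SetLike.mem_coe, LinearMap.mem_ker, Finsupp.lapply_apply, bv_apply, if_neg] <;>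
        intro h <;> simp [h] at hi
    exact hle hu
  · intro h
    rw [← Finsupp.sum_single u]
    refine Submodule.sum_mem _ fun i hi => ?_
    obtain ⟨⟨k, x⟩, hk⟩ := i
    have hne := Finsupp.mem_support_iff.1 hi
    rw [single_eq]
    refine Submodule.smul_mem _ _ ?_
    have hk' : k = 1 ∨ k = 3 := by
      have h0 := fun h' => hne (h _ h')
      revert h0
      simp only
      clear * -
      revert k
      decide
    rcases hk' with rfl | rfl
    · exact Submodule.mem_sup_left (Submodule.subset_span ⟨x, rfl⟩)
    · exact Submodule.mem_sup_right (Submodule.subset_span ⟨x, rfl⟩)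

theorem ofReal_smul_mem {U : Submodule ℂ (Wsp m13 m23 m33)} {c : ℝ} {v : Wsp m13 m23 m33}
    (hc : c ≠ 0) (h : (c : ℂ) • v ∈ U) : v ∈ U :=
  (Submodule.smul_mem_iff U (Complex.ofReal_ne_zero.2 hc)).1 h

/-- Each sector is an irreducible `U_q[gl(2)]`-module: one basis vector generates it. -/
theorem sector_mem (hq : 0 < q) (hq1 : q ≠ 1) (R : GZ q m13 m23 m33)
    {U : Submodule ℂ (Wsp m13 m23 m33)} (h12 : ∀ v ∈ U, R.E12 v ∈ U) (h21 : ∀ v ∈ U, R.E21 v ∈ U)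
    {k : Fin 4} {x : ℤ} (hx : InR m13 m23 m33 k x) (hv : bv m13 m23 m33 k x ∈ U)
    {y : ℤ} (hy : InR m13 m23 m33 k y) : bv m13 m23 m33 k y ∈ U := by
  unfold InR at hx hy
  have up : ∀ n : ℤ, x ≤ n → n ≤ M12 m13 m23 m33 k → bv m13 m23 m33 k n ∈ U := by
    intro n hn
    induction n, hn using Int.leInduction with
    | base => exact fun _ => hv
    | succ n hn ih =>
      intro hle
      have h := h12 _ (ih (by lia))
      rw [R.hE12 k n ⟨by lia, by lia⟩] at h
      exact ofReal_smul_mem (Real.sqrt_ne_zero'.2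
        (mul_pos (qn_pos hq hq1 (by lia)) (qn_pos hq hq1 (by lia)))) h
  have down : ∀ n : ℤ, n ≤ x → M22 m13 m23 m33 k ≤ n → bv m13 m23 m33 k n ∈ U := by
    intro n hn
    induction n, hn using Int.leInductionDown with
    | base => exact fun _ => hv
    | pred n hn ih =>
      intro hle
      have h := h21 _ (ih (by lia))
      rw [R.hE21 k n ⟨by lia, by lia⟩] at h
      exact ofReal_smul_mem (Real.sqrt_ne_zero'.2
        (mul_pos (qn_pos hq hq1 (by lia)) (qn_pos hq hq1 (by lia)))) h
  rcases le_total x y with h | h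
  · exact up y h hy.2
  · exact down y h hy.1

/-- When `[m23 + m33] = 0`, the sector-`0` coordinates of `E23 u` depend only on the
sector-`2` coordinates of `u`. -/
theorem E23_coord (R : GZ q m13 m23 m33) (h2 : m23 + m33 = 0) {x : ℤ}
    (hx : InR m13 m23 m33 2 x) (hx0 : InR m13 m23 m33 0 x) (u : Wsp m13 m23 m33) :
    R.E23 u ⟨(0, x), hx0⟩ =
      ((Real.sqrt (qn q (m13 - x) / qn q (m13 - m23)) * qn q (m13 + m33 + 1) : ℝ) : ℂ) *
        u ⟨(2, x), hx⟩ := by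
  induction u using Finsupp.induction_linear with
  | zero => simp
  | add f g hf hg => rw [map_add, Finsupp.add_apply, hf, hg, Finsupp.add_apply, mul_add]
  | single j a =>
    obtain ⟨⟨k, y⟩, hj⟩ := j
    rw [single_eq, map_smul, Finsupp.smul_apply, Finsupp.smul_apply, bv_apply]
    fin_cases k <;> simp only [Fin.zero_eta, Fin.mk_one, Fin.reduceFinMk] at hj ⊢
    · rw [R.hE23₀ y hj]; simp
    · rw [R.hE23₁ y hj, h2, qn_zero]; simp
    · rw [R.hE23₂ y hj, Finsupp.smul_apply, bv_apply]
      by_cases hxy : x = y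
      · subst hxy; simp; ring
      · simp [hxy]
    · rw [R.hE23₃ y hj, h2, qn_zero, Finsupp.sub_apply, Finsupp.smul_apply, bv_apply]; simp

theorem bv_zero_mem (R : GZ q m13 m23 m33) {U : Submodule ℂ (Wsp m13 m23 m33)}
    (h11 : ∀ v ∈ U, R.E11 v ∈ U) (h33 : ∀ v ∈ U, R.E33 v ∈ U) {u : Wsp m13 m23 m33} (hu : u ∈ U)
    {x : ℤ} (hx : InR m13 m23 m33 0 x) (hne : u ⟨(0, x), hx⟩ ≠ 0) : bv m13 m23 m33 0 x ∈ U := by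
  obtain ⟨w, hw, hwi⟩ := filter_mem U R.E33 (fun i => ((M32 m13 m23 m33 i.1.1 : ℤ) : ℂ))
    (fun i => by rw [← bv_of i.2]; exact R.hE33 _ _ i.2) h33 hu ((M32 m13 m23 m33 0 : ℤ) : ℂ)
  obtain ⟨z, hz, hzi⟩ := filter_mem U R.E11 (fun i => ((i.1.2 : ℤ) : ℂ))
    (fun i => by rw [← bv_of i.2]; exact R.hE11 _ _ i.2) h11 hw (x : ℂ)
  have hzz : z = u ⟨(0, x), hx⟩ • bv m13 m23 m33 0 x := by
    ext i
    obtain ⟨⟨k, y⟩, hi⟩ := i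
    rw [hzi, hwi, Finsupp.smul_apply, bv_apply]
    simp only [Int.cast_inj]
    by_cases hy : y = x
    · subst hy
      fin_cases k <;> simp [M32, trip]
    · simp [hy]
  rw [hzz] at hz
  exact (Submodule.smul_mem_iff U hne).1 hz

theorem eq_top_of_not_le (hq : 0 < q) (hq1 : q ≠ 1) (hm : m23 ≤ m13) (R : GZ q m13 m23 m33)
    (h2 : m23 + m33 = 0) {U : Submodule ℂ (Wsp m13 m23 m33)} (hU : Invariant q m13 m23 m33 R U)
    (hle : ¬ U ≤ Vk m13 m23 m33 1 ⊔ Vk m13 m23 m33 3) : U = ⊤ := by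
  have h11 : ∀ v ∈ U, R.E11 v ∈ U := hU _ (by simp)
  have h33 : ∀ v ∈ U, R.E33 v ∈ U := hU _ (by simp)
  have h12 : ∀ v ∈ U, R.E12 v ∈ U := hU _ (by simp)
  have h21 : ∀ v ∈ U, R.E21 v ∈ U := hU _ (by simp)
  have h23 : ∀ v ∈ U, R.E23 v ∈ U := hU _ (by simp)
  have h32 : ∀ v ∈ U, R.E32 v ∈ U := hU _ (by simp)
  obtain ⟨u, hu, hnot⟩ := SetLike.not_le_iff_exists.1 hle
  rw [mem_I2] at hnot
  push Not at hnot
  obtain ⟨⟨⟨k, x⟩, hk⟩, hk', hne⟩ := hnot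
  have hex : ∃ x, InR m13 m23 m33 0 x ∧ bv m13 m23 m33 0 x ∈ U := by
    simp only at hk'
    rcases hk' with rfl | rfl
    · exact ⟨x, hk, bv_zero_mem R h11 h33 hu hk hne⟩
    · have hk2 := inR2.1 hk
      have hx0 : InR m13 m23 m33 0 x := inR0.2 ⟨hk2.1, by lia⟩
      refine ⟨x, hx0, bv_zero_mem R h11 h33 (h23 u hu) hx0 ?_⟩
      rw [E23_coord R h2 hk hx0]
      refine mul_ne_zero (Complex.ofReal_ne_zero.2 (mul_ne_zero (Real.sqrt_ne_zero'.2 ?_) ?_)) hne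
      · exact div_pos (qn_pos hq hq1 (by lia)) (qn_pos hq hq1 (by lia))
      · exact (qn_pos hq hq1 (by lia)).ne'
  obtain ⟨x0, hx0, hv0⟩ := hex
  have V0 : ∀ x, InR m13 m23 m33 0 x → bv m13 m23 m33 0 x ∈ U := fun x hx =>
    sector_mem hq hq1 R h12 h21 hx0 hv0 hx
  -- At `x = m13` the sector-`2` term of `E32 v(0, x)` is out of range.
  have V1 : ∀ x, InR m13 m23 m33 1 x → bv m13 m23 m33 1 x ∈ U := by
    have htop : InR m13 m23 m33 0 m13 := inR0.2 ⟨hm, le_rfl⟩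
    have h := h32 _ (V0 m13 htop)
    rw [R.hE32₀ m13 htop, bv_not (k := 2) (by rw [inR2]; lia), smul_zero, add_zero] at h
    have h' := ofReal_smul_mem (Real.sqrt_ne_zero'.2
      (div_pos (qn_pos hq hq1 (by lia)) (qn_pos hq hq1 (by lia)))) h
    exact fun x hx => sector_mem hq hq1 R h12 h21 (inR1.2 ⟨by lia, le_rfl⟩) h' hx
  have V2 : ∀ x, InR m13 m23 m33 2 x → bv m13 m23 m33 2 x ∈ U := by
    intro x hx
    have hx2 := inR2.1 hx
    have hx0 : InR m13 m23 m33 0 x := inR0.2 ⟨hx2.1, by lia⟩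
    have h := h32 _ (V0 x hx0)
    rw [R.hE32₀ x hx0, Submodule.add_mem_iff_right _
      (U.smul_mem _ (V1 x (inR1.2 ⟨by lia, by lia⟩)))] at h
    exact ofReal_smul_mem (div_ne_zero (Real.sqrt_ne_zero'.2
      (mul_pos (qn_pos hq hq1 (by lia)) (qn_pos hq hq1 (by lia))))
      (qn_pos hq hq1 (by lia)).ne') h
  have V3 : ∀ x, InR m13 m23 m33 3 x → bv m13 m23 m33 3 x ∈ U := by
    intro x hx
    have hx3 := inR3.1 hx
    have hx1 : InR m13 m23 m33 1 x := inR1.2 ⟨hx3.1, by lia⟩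
    have h := h32 _ (V1 x hx1)
    rw [R.hE32₁ x hx1] at h
    exact ofReal_smul_mem (mul_ne_zero hq.ne' (Real.sqrt_ne_zero'.2
      (div_pos (qn_pos hq hq1 (by lia)) (qn_pos hq hq1 (by lia))))) h
  refine eq_top_of_bv fun k x hx => ?_
  fin_cases k
  exacts [V0 x hx, V1 x hx, V2 x hx, V3 x hx]

theorem Vk_map_le {k : Fin 4} {S : Submodule ℂ (Wsp m13 m23 m33)}
    (E : Wsp m13 m23 m33 →ₗ[ℂ] Wsp m13 m23 m33)
    (h : ∀ x, InR m13 m23 m33 k x → E (bv m13 m23 m33 k x) ∈ S) :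
    Vk m13 m23 m33 k ≤ S.comap E := by
  refine Submodule.span_le.2 ?_
  rintro _ ⟨x, rfl⟩
  rw [SetLike.mem_coe, Submodule.mem_comap]
  by_cases hx : InR m13 m23 m33 k x
  · exact h x hx
  · rw [bv_not hx, map_zero]
    exact S.zero_mem

theorem I2_invariant (R : GZ q m13 m23 m33) (h2 : m23 + m33 = 0) :
    Invariant q m13 m23 m33 R (Vk m13 m23 m33 1 ⊔ Vk m13 m23 m33 3) := by
  have b1 : ∀ x, bv m13 m23 m33 1 x ∈ Vk m13 m23 m33 1 ⊔ Vk m13 m23 m33 3 := fun x =>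
    Submodule.mem_sup_left (Submodule.subset_span ⟨x, rfl⟩)
  have b3 : ∀ x, bv m13 m23 m33 3 x ∈ Vk m13 m23 m33 1 ⊔ Vk m13 m23 m33 3 := fun x =>
    Submodule.mem_sup_right (Submodule.subset_span ⟨x, rfl⟩)
  intro E hE
  suffices h : Vk m13 m23 m33 1 ⊔ Vk m13 m23 m33 3 ≤
      (Vk m13 m23 m33 1 ⊔ Vk m13 m23 m33 3).comap E from fun x hx => h hx
  simp only [Set.mem_insert_iff, Set.mem_singleton_iff] at hE
  refine sup_le (Vk_map_le E fun x hx => ?_) (Vk_map_le E fun x hx => ?_)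
  · rcases hE with rfl | rfl | rfl | rfl | rfl | rfl | rfl
    · rw [R.hE11 _ _ hx]; exact Submodule.smul_mem _ _ (b1 _)
    · rw [R.hE22 _ _ hx]; exact Submodule.smul_mem _ _ (b1 _)
    · rw [R.hE33 _ _ hx]; exact Submodule.smul_mem _ _ (b1 _)
    · rw [R.hE12 _ _ hx]; exact Submodule.smul_mem _ _ (b1 _)
    · rw [R.hE21 _ _ hx]; exact Submodule.smul_mem _ _ (b1 _)
    · rw [R.hE23₁ _ hx, h2, qn_zero]; simp
    · rw [R.hE32₁ _ hx]; exact Submodule.smul_mem _ _ (b3 _)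
  · rcases hE with rfl | rfl | rfl | rfl | rfl | rfl | rfl
    · rw [R.hE11 _ _ hx]; exact Submodule.smul_mem _ _ (b3 _)
    · rw [R.hE22 _ _ hx]; exact Submodule.smul_mem _ _ (b3 _)
    · rw [R.hE33 _ _ hx]; exact Submodule.smul_mem _ _ (b3 _)
    · rw [R.hE12 _ _ hx]; exact Submodule.smul_mem _ _ (b3 _)
    · rw [R.hE21 _ _ hx]; exact Submodule.smul_mem _ _ (b3 _)
    · rw [R.hE23₃ _ hx, h2, qn_zero, zero_div, mul_zero, Complex.ofReal_zero, zero_smul, sub_zero]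
      exact Submodule.smul_mem _ _ (b1 _)
    · rw [R.hE32₃ _ hx]; exact Submodule.zero_mem _

end

/-- Assume `m23 + m33 = 0` (class 2 nontypicality). Then
`I_2 := V_1 ⊕ V_3` is a proper invariant subspace of `W`, every proper
invariant subspace of `W` is contained in `I_2`, and the operators induced by
`E11, E22, E33, E12, E21, E23, E32` on the quotient `W/I_2` leave no subspace
invariant except `{0}` and `W/I_2`: `W/I_2` carries the class 2 nontypical
irreducible representation of `U_q[gl(2/1)]`. -/
theorem stmt_14 (q : ℝ) (hq : 0 < q) (hq1 : q ≠ 1)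
    (m13 m23 m33 : ℤ) (hm : m23 ≤ m13) (R : GZ q m13 m23 m33)
    (h2 : m23 + m33 = 0) :
    Invariant q m13 m23 m33 R (Vk m13 m23 m33 1 ⊔ Vk m13 m23 m33 3) ∧
    Vk m13 m23 m33 1 ⊔ Vk m13 m23 m33 3 ≠ ⊤ ∧
    (∀ U : Submodule ℂ (Wsp m13 m23 m33), Invariant q m13 m23 m33 R U → U ≠ ⊤ →
      U ≤ Vk m13 m23 m33 1 ⊔ Vk m13 m23 m33 3) ∧
    (∀ Ubar : Submodule ℂ
        (Wsp m13 m23 m33 ⧸ (Vk m13 m23 m33 1 ⊔ Vk m13 m23 m33 3)),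
      (∀ E ∈ ({R.E11, R.E22, R.E33, R.E12, R.E21, R.E23, R.E32} :
          Set (Wsp m13 m23 m33 →ₗ[ℂ] Wsp m13 m23 m33)),
        ∀ x : Wsp m13 m23 m33,
          (Vk m13 m23 m33 1 ⊔ Vk m13 m23 m33 3).mkQ x ∈ Ubar →
          (Vk m13 m23 m33 1 ⊔ Vk m13 m23 m33 3).mkQ (E x) ∈ Ubar) →
      Ubar = ⊥ ∨ Ubar = ⊤) := by
  refine ⟨I2_invariant R h2, ?_, fun U hU hne => ?_, fun Ubar hUbar => ?_⟩
  · intro htop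
    have hx : InR m13 m23 m33 0 m13 := inR0.2 ⟨hm, le_rfl⟩
    have h : bv m13 m23 m33 0 m13 ∈ Vk m13 m23 m33 1 ⊔ Vk m13 m23 m33 3 := by
      rw [htop]; trivial
    rw [mem_I2] at h
    have h0 := h ⟨(0, m13), hx⟩ (Or.inl rfl)
    rw [bv_apply, if_pos rfl] at h0
    exact one_ne_zero h0
  · by_contra hle
    exact hne (eq_top_of_not_le hq hq1 hm R h2 hU hle)
  · have hinv : Invariant q m13 m23 m33 R
        (Ubar.comap (Vk m13 m23 m33 1 ⊔ Vk m13 m23 m33 3).mkQ) :=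
      fun E hE x hx => hUbar E hE x hx
    by_cases hle : Ubar.comap (Vk m13 m23 m33 1 ⊔ Vk m13 m23 m33 3).mkQ ≤
        Vk m13 m23 m33 1 ⊔ Vk m13 m23 m33 3
    · left
      rw [eq_bot_iff]
      intro y hy
      obtain ⟨x, rfl⟩ := Submodule.mkQ_surjective _ y
      rw [Submodule.mem_bot, Submodule.mkQ_apply, Submodule.Quotient.mk_eq_zero]
      exact hle hy
    · right
      have htop := eq_top_of_not_le hq hq1 hm R h2 hinv hle
      rw [eq_top_iff]
      intro y _
      obtain ⟨x, rfl⟩ := Submodule.mkQ_surjective _ y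
      have hx : x ∈ Ubar.comap (Vk m13 m23 m33 1 ⊔ Vk m13 m23 m33 3).mkQ := by
        rw [htop]; trivial
      exact hx
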